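/- Let 0 ≤ j ≤ n-1. For every P ∈ MvPolynomial (Fin n) 𝔽_p with aeval(h) P = d_{n,j} (where aeval(h) substitutes h_1, …, h_n for the n variables), the exponent vector v with v_t = p^j for 1 ≤ t ≤ n-j and v_t = 0 for n-j+1 ≤ t ≤ n lies in the support of P with coefficient 1 (that is, the monomial (h_1 h_2 ⋯ h_{n-j})^{p^j} occurs in d_{n,j} with coefficient 1), and every other element of the support of P is strictly smaller than v in left-lexicographic order (comparing coordinates from t = 1 upward). -/

import Mathlib

open MvPolynomial

/-- `V p n k` : the set of `𝔽_p`-linear combinations of the first `k` variables. -/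
noncomputable def V (p n k : ℕ) [Fact p.Prime] : Finset (MvPolynomial (Fin n) (ZMod p)) :=
  (Finset.univ : Finset (Fin n → ZMod p)).image
    (fun c => ∑ j ∈ Finset.univ.filter (fun j : Fin n => j.val < k), C (c j) * X j)

/-- `f p n k = ∏_{u ∈ V_k} (X - C u)`. -/
noncomputable def f (p n k : ℕ) [Fact p.Prime] :
    Polynomial (MvPolynomial (Fin n) (ZMod p)) :=
  ∏ u ∈ V p n k, (Polynomial.X - Polynomial.C u)

/-- Dickson invariant `d_{k,i}`. -/
noncomputable def d (p n k i : ℕ) [Fact p.Prime] : MvPolynomial (Fin n) (ZMod p) :=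
  (-1) ^ (k - i) * (f p n k).coeff (p ^ i)

/-- Borel generator: `hGen p n j` is `h_{j+1}` of the paper. -/
noncomputable def hGen (p n : ℕ) [Fact p.Prime] (j : Fin n) : MvPolynomial (Fin n) (ZMod p) :=
  (Polynomial.eval (X j) (f p n j.val)) ^ (p - 1)

/-- Action of `GL_n(𝔽_p)` on `S` by linear substitution `g · y_j = ∑_i g_{ij} y_i`. -/
noncomputable def gact (p n : ℕ) [Fact p.Prime] (g : GL (Fin n) (ZMod p)) :
    MvPolynomial (Fin n) (ZMod p) →ₐ[ZMod p] MvPolynomial (Fin n) (ZMod p) :=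
  aeval (fun j : Fin n => ∑ i : Fin n, C ((g : Matrix (Fin n) (Fin n) (ZMod p)) i j) * X i)

/-!
Since `f_{k-1}` is `𝔽_p`-linear and `∏_{c ∈ 𝔽_p} (x - c y) = x ^ p - y ^ (p - 1) x`, one gets
`f_k = f_{k-1} ^ p - h_k f_{k-1}`. The coefficients of `f_k` are therefore the values at `h` of
universal polynomials: the coefficient `c_{k,j}` of `T ^ (p ^ j)` satisfies
`c_{k+1,j+1} = c_{k,j} ^ p - h_{k+1} c_{k,j+1}`. Each `y_i` is a root of `f_n`, so `S` is
integral over `𝔽_p[h_1, …, h_n]`; hence the `h_i` are algebraically independent, and `P` is, up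
to sign, the universal polynomial. Its lexicographic leading term is read off the recursion.
-/

open scoped Polynomial MonomialOrder

section FiniteField

variable {K : Type*} [Field K] [Fintype K]

theorem prod_X_sub_C_univ :
    ∏ c : K, (Polynomial.X - Polynomial.C c) =
      Polynomial.X ^ Fintype.card K - Polynomial.X := by
  have hmonic : (Polynomial.X ^ Fintype.card K - Polynomial.X : K[X]).Monic :=
    Polynomial.monic_X_pow_sub (by simpa using Fintype.one_lt_card (α := K))
  have hprod := Polynomial.prod_multiset_X_sub_C_of_monic_of_roots_card_eq hmonic <| by
    rw [FiniteField.roots_X_pow_card_sub_X,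
      FiniteField.X_pow_card_sub_X_natDegree_eq K Fintype.one_lt_card]
    rfl
  rwa [FiniteField.roots_X_pow_card_sub_X] at hprod

theorem prod_sub_smul {R : Type*} [CommRing R] [Algebra K R] (x y : R) :
    ∏ c : K, (x - c • y) = x ^ Fintype.card K - y ^ (Fintype.card K - 1) * x := by
  have hhom : ∏ c : K, (X 0 - C c * X 1 : MvPolynomial (Fin 2) K) =
      X 0 ^ Fintype.card K - X 0 * X 1 ^ (Fintype.card K - 1) := by
    have h := Polynomial.homogenize_finsetProd (s := Finset.univ) (n := fun _ : K => 1)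
      (p := fun c : K => Polynomial.X - Polynomial.C c)
      (fun c _ => (Polynomial.natDegree_X_sub_C c).le)
    simpa [prod_X_sub_C_univ, Polynomial.homogenize_X, Fintype.card_ne_zero,
      Polynomial.homogenize_X_pow, eq_comm] using h
  simpa [Algebra.smul_def, mul_comm] using congrArg (aeval ![x, y]) hhom

end FiniteField

section FrobProd

variable {R : Type*} [CommRing R] {n : ℕ}

/-- The polynomial `(T ^ q - aₖ₋₁ T) ∘ ⋯ ∘ (T ^ q - a₀ T)`, the product of the factors
`Frobenius - aᵢ` in the ring of `q`-polynomials. At `a = hGen p n` it is `f p n k`; at the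
indeterminates `a = X` its coefficients express the Dickson invariants through the `hᵢ`. -/
noncomputable def frobProd (q : ℕ) (a : Fin n → R) : Fin (n + 1) → R[X] :=
  Fin.induction Polynomial.X fun i g => g ^ q - Polynomial.C (a i) * g

theorem frobProd_zero (q : ℕ) (a : Fin n → R) : frobProd q a 0 = Polynomial.X := rfl

theorem frobProd_succ (q : ℕ) (a : Fin n → R) (i : Fin n) :
    frobProd q a i.succ =
      frobProd q a i.castSucc ^ q - Polynomial.C (a i) * frobProd q a i.castSucc := rfl

theorem map_frobProd {S : Type*} [CommRing S] (φ : R →+* S) (q : ℕ) (a : Fin n → R)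
    (k : Fin (n + 1)) : (frobProd q a k).map φ = frobProd q (φ ∘ a) k := by
  induction k using Fin.induction with
  | zero => simp [frobProd_zero]
  | succ i ih => simp [frobProd_succ, ih]

theorem isMonicOfDegree_frobProd [Nontrivial R] {q : ℕ} (hq : 1 < q) (a : Fin n → R)
    (k : Fin (n + 1)) : (frobProd q a k).IsMonicOfDegree (q ^ (k : ℕ)) := by
  induction k using Fin.induction with
  | zero => simpa [frobProd_zero] using Polynomial.isMonicOfDegree_X R
  | succ i ih =>
    rw [Fin.val_succ, pow_succ]
    refine (ih.pow q).sub <| (Polynomial.natDegree_C_mul_le _ _).trans_lt ?_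
    change (frobProd q a i.castSucc).natDegree < _
    rw [ih.natDegree_eq]
    exact lt_mul_of_one_lt_right (by positivity) hq

theorem coeff_frobProd_self {q : ℕ} (hq : 1 < q) (a : Fin n → R) (k : Fin (n + 1)) :
    (frobProd q a k).coeff (q ^ (k : ℕ)) = 1 := by
  nontriviality R
  obtain ⟨hdeg, hmonic⟩ := isMonicOfDegree_frobProd hq a k
  rw [← hdeg, hmonic.coeff_natDegree]

theorem aeval_sub_smul_frobProd {K A : Type*} [Field K] [Fintype K] [CommRing A] [Algebra R A]
    [Algebra K A] (a : Fin n → R) (k : Fin (n + 1)) (x y : A) (c : K) :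
    Polynomial.aeval (x - c • y) (frobProd (Fintype.card K) a k) =
      Polynomial.aeval x (frobProd (Fintype.card K) a k) -
        c • Polynomial.aeval y (frobProd (Fintype.card K) a k) := by
  induction k using Fin.induction with
  | zero => simp [frobProd_zero]
  | succ i ih =>
    have hfrob (u v : A) :
        (u - c • v) ^ Fintype.card K = u ^ Fintype.card K - c • v ^ Fintype.card K := by
      simpa using map_sub (FiniteField.frobeniusAlgHom K A) u (c • v)
    simp only [frobProd_succ, map_sub, map_pow, map_mul, Polynomial.aeval_C, ih, hfrob,
      mul_sub, smul_sub, mul_smul_comm]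
    ring

end FrobProd

section Coefficients

theorem coeff_pow_expChar {R : Type*} [CommRing R] (p : ℕ) [ExpChar R p]
    (g : R[X]) (m : ℕ) :
    (g ^ p).coeff m = if p ∣ m then g.coeff (m / p) ^ p else 0 := by
  rw [← Polynomial.map_frobenius_expand, Polynomial.coeff_map,
    Polynomial.coeff_expand (expChar_pos R p)]
  split_ifs <;> simp [frobenius_def, expChar_ne_zero R p]

variable {R : Type*} [CommRing R] {p n : ℕ} [Fact p.Prime] [CharP R p]

theorem coeff_one_frobProd_succ (a : Fin n → R) (i : Fin n) :
    (frobProd p a i.succ).coeff 1 = -(a i * (frobProd p a i.castSucc).coeff 1) := by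
  have hp : ¬ p ∣ 1 := (Fact.out : p.Prime).not_dvd_one
  simp [frobProd_succ, coeff_pow_expChar p, hp, -Nat.dvd_one]

theorem coeff_pow_succ_frobProd_succ (a : Fin n → R) (i : Fin n) (j : ℕ) :
    (frobProd p a i.succ).coeff (p ^ (j + 1)) =
      (frobProd p a i.castSucc).coeff (p ^ j) ^ p -
        a i * (frobProd p a i.castSucc).coeff (p ^ (j + 1)) := by
  have hp : 0 < p := (Fact.out : p.Prime).pos
  rw [frobProd_succ, Polynomial.coeff_sub, Polynomial.coeff_C_mul, coeff_pow_expChar p,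
    if_pos (dvd_pow_self p j.succ_ne_zero), pow_succ, Nat.mul_div_cancel _ hp]

end Coefficients

section LeadingTerm

variable {σ R : Type*} [CommRing R] (m : MonomialOrder σ)

theorem leadingTerm_pow [IsReduced R] (P : MvPolynomial σ R) (k : ℕ) :
    m.leadingTerm (P ^ k) = m.leadingTerm P ^ k := by
  rw [MonomialOrder.leadingTerm, MonomialOrder.leadingTerm, m.degree_pow, m.leadingCoeff_pow,
    monomial_pow]

theorem leadingTerm_neg (P : MvPolynomial σ R) : m.leadingTerm (-P) = -m.leadingTerm P := by
  rw [MonomialOrder.leadingTerm, MonomialOrder.leadingTerm, m.degree_neg, m.leadingCoeff_neg,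
    map_neg]

variable {m} {P Q : MvPolynomial σ R} {v w : σ →₀ ℕ} {b c : R}

theorem degree_eq_of_leadingTerm_eq (hc : c ≠ 0) (hP : m.leadingTerm P = monomial v c) :
    m.degree P = v := by
  classical
  rw [← m.degree_leadingTerm, hP, m.degree_monomial, if_neg hc]

theorem coeff_eq_of_leadingTerm_eq (hc : c ≠ 0) (hP : m.leadingTerm P = monomial v c) :
    P.coeff v = c := by
  rw [← degree_eq_of_leadingTerm_eq hc hP, ← MonomialOrder.leadingCoeff,
    ← m.leadingCoeff_leadingTerm, hP, m.leadingCoeff_monomial]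

theorem lt_of_mem_support_of_leadingTerm_eq (hc : c ≠ 0) (hP : m.leadingTerm P = monomial v c)
    (hw : w ∈ P.support) (hwv : w ≠ v) : w ≺[m] v := by
  have hle : w ≼[m] v := by
    rw [← degree_eq_of_leadingTerm_eq hc hP]
    exact m.le_degree hw
  exact hle.lt_of_ne (m.toSyn.injective.ne hwv)

theorem leadingTerm_sub_eq_left (hP : m.leadingTerm P = monomial v b)
    (hQ : m.leadingTerm Q = monomial w c) (hb : b ≠ 0) (hc : c ≠ 0) (hwv : w ≺[m] v) :
    m.leadingTerm (P - Q) = monomial v b := by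
  rw [← degree_eq_of_leadingTerm_eq hb hP, ← degree_eq_of_leadingTerm_eq hc hQ] at hwv
  rw [MonomialOrder.leadingTerm, m.degree_sub_of_lt hwv, m.leadingCoeff_sub_of_lt hwv,
    ← MonomialOrder.leadingTerm, hP]

end LeadingTerm

section BlockExponent

variable {n : ℕ}

/-- The exponent vector of the monomial `(X₀ ⋯ Xₘ₋₁) ^ q`, which is the shape of the leading
monomials of the Dickson invariants in the `hᵢ`. -/
noncomputable def blockExponent (n m q : ℕ) : Fin n →₀ ℕ :=
  Finsupp.equivFunOnFinite.symm fun t => if t.val < m then q else 0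

theorem blockExponent_apply (m q : ℕ) (t : Fin n) :
    blockExponent n m q t = if t.val < m then q else 0 := rfl

theorem blockExponent_zero (q : ℕ) : blockExponent n 0 q = 0 := by
  ext t
  simp [blockExponent_apply]

theorem smul_blockExponent (r m q : ℕ) : r • blockExponent n m q = blockExponent n m (q * r) := by
  ext t
  simp [blockExponent_apply, mul_comm]

theorem single_add_blockExponent_one (i : Fin n) :
    Finsupp.single i 1 + blockExponent n i 1 = blockExponent n (i + 1) 1 := by
  ext t
  simp only [Finsupp.add_apply, Finsupp.single_apply, blockExponent_apply, Fin.ext_iff]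
  grind

theorem single_add_blockExponent_lt {m q : ℕ} (hq : 0 < q) {i : Fin n} (hm : m < i) :
    Finsupp.single i 1 + blockExponent n m q ≺[MonomialOrder.lex] blockExponent n (m + 1) q := by
  have hne {t : Fin n} (ht : t.val ≤ m) : i ≠ t := by
    rintro rfl
    exact (hm.trans_le ht).false
  rw [MonomialOrder.lex_lt_iff, Finsupp.Lex.lt_iff]
  refine ⟨⟨m, hm.trans i.isLt⟩, fun t ht => ?_, ?_⟩
  · have ht' : t.val < m := ht
    simp [blockExponent_apply, hne ht'.le, ht', ht'.trans m.lt_succ_self]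
  · simpa [blockExponent_apply, hne] using hq

end BlockExponent

/-- In `c_{i+1,j+1} = c_{i,j} ^ p - X_i c_{i,j+1}` the `p`-th power dominates: its exponent vector
first differs from the other one at coordinate `i - j - 1`, where it is larger. -/
theorem leadingTerm_coeff_frobProd_X {R : Type*} [CommRing R] [IsDomain R] {p n : ℕ}
    [Fact p.Prime] [CharP R p] (k : Fin (n + 1)) {j : ℕ} (hj : j ≤ k) :
    MonomialOrder.lex.leadingTerm
        ((frobProd p (X : Fin n → MvPolynomial (Fin n) R) k).coeff (p ^ j)) =
      monomial (blockExponent n (k - j) (p ^ j)) ((-1) ^ (k - j : ℕ)) := by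
  have hp : p.Prime := Fact.out
  induction k using Fin.induction generalizing j with
  | zero =>
    obtain rfl : j = 0 := by simpa using hj
    simpa [frobProd_zero, blockExponent_zero] using MonomialOrder.lex.leadingTerm_C (1 : R)
  | succ i ih =>
    obtain rfl | hlt := hj.eq_or_lt
    · rw [coeff_frobProd_self hp.one_lt, Nat.sub_self, blockExponent_zero, pow_zero]
      exact MonomialOrder.lex.leadingTerm_C (1 : R)
    have hji : j ≤ i := Nat.le_of_lt_succ hlt
    have hXmul : MonomialOrder.lex.leadingTerm
        (X i * (frobProd p X i.castSucc).coeff (p ^ j) : MvPolynomial (Fin n) R) =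
        monomial (Finsupp.single i 1 + blockExponent n (i - j) (p ^ j)) ((-1) ^ (i - j : ℕ)) := by
      rw [MonomialOrder.leadingTerm_mul, ih hji, X, MonomialOrder.leadingTerm_monomial,
        monomial_mul, one_mul, Fin.val_castSucc]
    rw [Fin.val_succ, Nat.sub_add_comm hji]
    cases j with
    | zero =>
      rw [pow_zero, Nat.sub_zero] at hXmul ⊢
      rw [coeff_one_frobProd_succ, leadingTerm_neg, hXmul, single_add_blockExponent_one, ← map_neg,
        pow_succ, mul_neg_one]
    | succ j =>
      have hpow : MonomialOrder.lex.leadingTerm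
          ((frobProd p X i.castSucc).coeff (p ^ j) ^ p : MvPolynomial (Fin n) R) =
          monomial (blockExponent n (i - j) (p ^ (j + 1))) ((-1) ^ (i - j : ℕ)) := by
        rw [leadingTerm_pow, ih (Nat.le_of_succ_le hji), monomial_pow, smul_blockExponent,
          ← pow_succ, Fin.val_castSucc, pow_right_comm, neg_one_pow_char R p]
      have hsub : (i - (j + 1) + 1 : ℕ) = i - j := by lia
      rw [coeff_pow_succ_frobProd_succ, hsub]
      refine leadingTerm_sub_eq_left hpow hXmul (by simp) (by simp) ?_
      rw [← hsub]
      exact single_add_blockExponent_lt (pow_pos hp.pos _) (by lia)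

section AlgebraicIndependence

theorem isIntegral_adjoin_of_eval_frobProd_eq_zero {K R : Type*} [CommRing K] [CommRing R]
    [Algebra K R] {n q : ℕ} (hq : 1 < q) (a : Fin n → R) (k : Fin (n + 1)) {x : R}
    (hx : (frobProd q a k).eval x = 0) : IsIntegral (Algebra.adjoin K (Set.range a)) x := by
  nontriviality Algebra.adjoin K (Set.range a)
  let b : Fin n → Algebra.adjoin K (Set.range a) := fun i => ⟨a i, Algebra.subset_adjoin ⟨i, rfl⟩⟩
  refine ⟨frobProd q b k, (isMonicOfDegree_frobProd hq b k).monic, ?_⟩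
  rw [Polynomial.eval₂_eq_eval_map, map_frobProd]
  exact hx

theorem algebraicIndependent_of_isIntegral_X {σ K : Type*} [Finite σ] [CommRing K] [IsDomain K]
    (y : σ → MvPolynomial σ K)
    (hy : ∀ i, IsIntegral (Algebra.adjoin K (Set.range y)) (X i : MvPolynomial σ K)) :
    AlgebraicIndependent K y := by
  have hint : Algebra.IsIntegral (Algebra.adjoin K (Set.range y)) (MvPolynomial σ K) := by
    refine ⟨fun P => ?_⟩
    induction P using MvPolynomial.induction_on with
    | C c => exact isIntegral_algebraMap (x := algebraMap K (Algebra.adjoin K (Set.range y)) c)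
    | add P Q hP hQ => exact hP.add hQ
    | mul_X P i hP => exact hP.mul (hy i)
  have : Algebra.IsAlgebraic (Algebra.adjoin K (Set.range y)) (MvPolynomial σ K) := hint.isAlgebraic
  exact (Algebra.IsAlgebraic.isTranscendenceBasis_of_lift_le_trdeg_of_finite K y (by simp)).1

end AlgebraicIndependence

section Dickson

variable {p n : ℕ} [Fact p.Prime]

theorem mem_V_iff {k : ℕ} {u : MvPolynomial (Fin n) (ZMod p)} :
    u ∈ V p n k ↔ u ∈ Submodule.span (ZMod p) (X '' {i : Fin n | i.val < k}) := by
  have h := Submodule.mem_span_image_finset_iff_exists_fun' (R := ZMod p) (x := u)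
    (v := (X : Fin n → MvPolynomial (Fin n) (ZMod p)))
    (s := Finset.univ.filter fun i : Fin n => i.val < k)
  rw [Finset.coe_filter_univ] at h
  simp [h, V, smul_eq_C_mul]

theorem V_zero : V p n 0 = {0} := by
  ext u
  simp [mem_V_iff]

theorem X_mem_V (i : Fin n) : X i ∈ V p n n :=
  mem_V_iff.2 (Submodule.subset_span ⟨i, i.isLt, rfl⟩)

theorem V_succ (i : Fin n) :
    V p n (i + 1) = (Finset.univ ×ˢ V p n i).image fun z : ZMod p × _ => z.2 + z.1 • X i := by
  have hset : {t : Fin n | t.val < i + 1} = insert i {t : Fin n | t.val < i} := by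
    ext t
    simp only [Set.mem_ofPred_eq, Set.mem_insert_iff, Fin.ext_iff]
    lia
  ext u
  simp only [mem_V_iff, hset, Set.image_insert_eq, Submodule.mem_span_insert, Finset.mem_image,
    Finset.mem_product, Finset.mem_univ, true_and, Prod.exists]
  simp only [add_comm, eq_comm]

theorem injOn_add_smul_X (i : Fin n) :
    Set.InjOn (fun z : ZMod p × MvPolynomial (Fin n) (ZMod p) => z.2 + z.1 • X i)
      ↑((Finset.univ : Finset (ZMod p)) ×ˢ V p n i) := by
  rintro ⟨c, u⟩ hu ⟨c', u'⟩ hu' (heq : u + c • X i = u' + c' • X i)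
  simp only [Finset.coe_product, Finset.coe_univ, Set.mem_prod, Set.mem_univ, true_and,
    Finset.mem_coe, mem_V_iff] at hu hu'
  have hX : (X i : MvPolynomial (Fin n) (ZMod p)) ∉
      Submodule.span (ZMod p) (X '' {t : Fin n | t.val < i}) :=
    (linearIndependent_X (Fin n) (ZMod p)).notMem_span_image (lt_irrefl i.val)
  have hdiff : (c - c') • X i = u' - u := by
    rw [sub_smul, sub_eq_sub_iff_add_eq_add, add_comm, heq]
  obtain rfl : c = c' := by
    by_contra hne
    exact hX <| (Submodule.smul_mem_iff _ (sub_ne_zero.2 hne)).1 (hdiff ▸ sub_mem hu' hu)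
  rw [add_right_cancel heq]

theorem prod_V_succ {M : Type*} [CommMonoid M] (i : Fin n)
    (g : MvPolynomial (Fin n) (ZMod p) → M) :
    ∏ u ∈ V p n (i + 1), g u = ∏ c : ZMod p, ∏ u ∈ V p n i, g (u + c • X i) := by
  rw [V_succ, Finset.prod_image (injOn_add_smul_X i), Finset.prod_product]

theorem f_succ_eq_prod_comp (i : Fin n) :
    f p n (i + 1) = ∏ c : ZMod p, (f p n i).comp (Polynomial.X - c • Polynomial.C (X i)) := by
  rw [f, prod_V_succ]
  refine Finset.prod_congr rfl fun c _ => ?_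
  rw [f, Polynomial.prod_comp]
  refine Finset.prod_congr rfl fun u _ => ?_
  simp only [Polynomial.sub_comp, Polynomial.X_comp, Polynomial.C_comp, map_add, Polynomial.smul_C]
  ring

theorem f_eq_frobProd (k : Fin (n + 1)) : f p n k = frobProd p (hGen p n) k := by
  induction k using Fin.induction with
  | zero => simp [f, V_zero, frobProd_zero]
  | succ i ih =>
    rw [Fin.val_castSucc] at ih
    have hcomp (c : ZMod p) : (f p n i).comp (Polynomial.X - c • Polynomial.C (X i)) =
        f p n i - c • Polynomial.C ((f p n i).eval (X i)) := by
      have h := aeval_sub_smul_frobProd (K := ZMod p) (hGen p n) i.castSucc Polynomial.X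
        (Polynomial.C (X i : MvPolynomial (Fin n) (ZMod p))) c
      rwa [ZMod.card, ← ih, ← Polynomial.comp_eq_aeval, ← Polynomial.comp_eq_aeval,
        ← Polynomial.comp_eq_aeval, Polynomial.comp_X, Polynomial.comp_C] at h
    calc f p n i.succ
        = ∏ c : ZMod p, (f p n i - c • Polynomial.C ((f p n i).eval (X i))) := by
          rw [Fin.val_succ, f_succ_eq_prod_comp]
          exact Finset.prod_congr rfl fun c _ => hcomp c
      _ = f p n i ^ p - Polynomial.C (hGen p n i) * f p n i := by
          rw [prod_sub_smul, ZMod.card, hGen, Polynomial.C_pow]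
      _ = frobProd p (hGen p n) i.succ := by rw [frobProd_succ, ih]

theorem algebraicIndependent_hGen : AlgebraicIndependent (ZMod p) (hGen p n) := by
  refine algebraicIndependent_of_isIntegral_X _ fun i =>
    isIntegral_adjoin_of_eval_frobProd_eq_zero (Fact.out : p.Prime).one_lt _ (Fin.last n) ?_
  rw [← f_eq_frobProd, Fin.val_last, f, Polynomial.eval_prod]
  exact Finset.prod_eq_zero (X_mem_V i) (by simp)

theorem d_eq_aeval_hGen (j : ℕ) :
    d p n n j = aeval (hGen p n) ((-1) ^ (n - j) *
      (frobProd p (X : Fin n → MvPolynomial (Fin n) (ZMod p)) (Fin.last n)).coeff (p ^ j)) := by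
  have hmap : f p n n =
      (frobProd p X (Fin.last n)).map (aeval (R := ZMod p) (hGen p n)).toRingHom := by
    have hX : (aeval (R := ZMod p) (hGen p n)).toRingHom ∘ X = hGen p n :=
      funext fun i => aeval_X _ i
    rw [map_frobProd, hX, ← f_eq_frobProd, Fin.val_last]
  rw [d, hmap]
  simp

theorem leadingTerm_of_aeval_hGen_eq_d {j : ℕ} (hj : j ≤ n) {P : MvPolynomial (Fin n) (ZMod p)}
    (hP : aeval (hGen p n) P = d p n n j) :
    MonomialOrder.lex.leadingTerm P = monomial (blockExponent n (n - j) (p ^ j)) 1 := by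
  obtain rfl : P = C ((-1) ^ (n - j)) * (frobProd p X (Fin.last n)).coeff (p ^ j) := by
    apply algebraicIndependent_hGen
    rw [hP, d_eq_aeval_hGen]
    simp
  rw [MonomialOrder.leadingTerm_mul, leadingTerm_coeff_frobProd_X _ hj,
    MonomialOrder.leadingTerm_C, C_mul_monomial, Fin.val_last, ← mul_pow, neg_one_mul, neg_neg,
    one_pow]

end Dickson

/-- the monomial `(h_1 ⋯ h_{n-j})^{p^j}` occurs in `d_{n,j}` with coefficient
`1` and is the left-lexicographically largest monomial of `d_{n,j}`. -/
theorem stmt15 (p n : ℕ) [Fact p.Prime] (j : ℕ) (hj : j ≤ n - 1) (hn : 1 ≤ n)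
    (P : MvPolynomial (Fin n) (ZMod p)) (hP : aeval (hGen p n) P = d p n n j) :
    MvPolynomial.coeff
      (Finsupp.equivFunOnFinite.symm
        (fun t : Fin n => if t.val < n - j then p ^ j else 0)) P = 1 ∧
    ∀ e ∈ P.support,
      e ≠ Finsupp.equivFunOnFinite.symm
            (fun t : Fin n => if t.val < n - j then p ^ j else 0) →
      ∃ t0 : Fin n,
        (∀ t : Fin n, t < t0 →
          e t = (if t.val < n - j then p ^ j else 0)) ∧
        e t0 < (if t0.val < n - j then p ^ j else 0) := by
  have hlead := leadingTerm_of_aeval_hGen_eq_d (by lia : j ≤ n) hP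
  refine ⟨coeff_eq_of_leadingTerm_eq one_ne_zero hlead, fun e he hne => ?_⟩
  have hlt := lt_of_mem_support_of_leadingTerm_eq one_ne_zero hlead he hne
  exact Finsupp.Lex.lt_iff.1 (MonomialOrder.lex_lt_iff.1 hlt)
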